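/- Let G be a graph with n vertices, m edges, and average degree d, and let {y_v : v ∈ V(G)} be unit vectors in R^N. Then G has a bisection of size at least m/2 − (1/π)·Σ_{uv∈E(G)} arcsin(⟨y_u,y_v⟩) − d·√( n + (4/π)·Σ_{{u,v}} arcsin(⟨y_u,y_v⟩) ), where the last sum is over all unordered pairs of distinct vertices. -/

import Mathlib

open Finset SimpleGraph RealInnerProductSpace

/-- `epairs G A B` is the number of ordered pairs `(u,v) ∈ A × B` with `u ~ v`;
for disjoint `A`, `B` this is the number of edges between `A` and `B`. -/
def epairs {V : Type*} [DecidableEq V] (G : SimpleGraph V) [DecidableRel G.Adj]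
    (A B : Finset V) : ℕ :=
  ((A ×ˢ B).filter fun p => G.Adj p.1 p.2).card

/-!
Cut the vertices by a random hyperplane through the origin with Gaussian normal `g`. By Sheppard's
formula `E[sgn⟨u,g⟩ sgn⟨v,g⟩] = (2/π) arcsin⟨u,v⟩`, the cut has expected size
`m/2 - (1/π) ∑ arcsin⟨y_u,y_v⟩`, and by Cauchy–Schwarz its expected imbalance is at most
`√(n + (4/π) ∑ arcsin⟨y_u,y_v⟩)`. As long as the two sides differ by at least two, the larger one
contains at least half of all vertices, hence one of degree at most `2d`; moving it across costs at
most `2d` edges and reduces the imbalance by two.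

For Sheppard's formula, the joint law of `⟨u,g⟩` and `⟨v,g⟩` depends only on the Gram matrix of `u`
and `v`, so these may be taken in `ℂ`, where rotation invariance of the Gaussian measure reduces the
expectation to the average of `sgn(sin θ) sgn(sin(θ + α))` over a circle, `α` being the angle
between `u` and `v`.
-/

section Rebalancing

lemma epairs_comm {V : Type*} [DecidableEq V] (G : SimpleGraph V) [DecidableRel G.Adj]
    (A B : Finset V) : epairs G A B = epairs G B A :=
  haveI : Std.Symm G.Adj := ⟨fun _ _ h => h.symm⟩
  Rel.card_interedges_comm (r := G.Adj) A B

variable {V : Type*} [Fintype V] (G : SimpleGraph V) [DecidableRel G.Adj]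

/-- The average degree `2m / n` of a graph, with value `0` for the graph without vertices. -/
noncomputable def avgDegree : ℝ := 2 * (#G.edgeFinset : ℝ) / Fintype.card V

lemma avgDegree_nonneg : 0 ≤ avgDegree G := by unfold avgDegree; positivity

lemma exists_mem_card_mul_degree_le {A : Finset V} (hA : A.Nonempty) :
    ∃ v ∈ A, #A * G.degree v ≤ 2 * #G.edgeFinset := by
  obtain ⟨v, hv, hmin⟩ := exists_min_image A (fun w => G.degree w) hA
  refine ⟨v, hv, ?_⟩
  calc #A * G.degree v
    _ ≤ ∑ w ∈ A, G.degree w := by simpa using card_nsmul_le_sum A (fun w => G.degree w) _ hmin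
    _ ≤ ∑ w, G.degree w := sum_le_sum_of_subset (subset_univ A)
    _ = 2 * #G.edgeFinset := G.sum_degrees_eq_twice_card_edges

lemma exists_mem_degree_le_two_mul_avgDegree {A : Finset V} (hA : A.Nonempty)
    (hcard : Fintype.card V ≤ 2 * #A) : ∃ v ∈ A, (G.degree v : ℝ) ≤ 2 * avgDegree G := by
  obtain ⟨v, hv, hdeg⟩ := exists_mem_card_mul_degree_le G hA
  refine ⟨v, hv, ?_⟩
  have hdeg : (#A : ℝ) * G.degree v ≤ 2 * #G.edgeFinset := mod_cast hdeg
  have hV : (0 : ℝ) < Fintype.card V := mod_cast Fintype.card_pos_iff.2 ⟨v⟩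
  rw [avgDegree, ← mul_div_assoc, le_div_iff₀ hV]
  calc (G.degree v : ℝ) * Fintype.card V
    _ ≤ G.degree v * (2 * #A) := by gcongr; exact mod_cast hcard
    _ = 2 * (#A * G.degree v) := by ring
    _ ≤ 2 * (2 * #G.edgeFinset) := mul_le_mul_of_nonneg_left hdeg zero_le_two

variable [DecidableEq V]

lemma epairs_compl_le_epairs_erase_compl_add_degree (A : Finset V) (v : V) :
    epairs G A Aᶜ ≤ epairs G (A.erase v) (A.erase v)ᶜ + G.degree v := by
  have hsub : {p ∈ A ×ˢ Aᶜ | G.Adj p.1 p.2} ⊆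
      {p ∈ A.erase v ×ˢ (A.erase v)ᶜ | G.Adj p.1 p.2} ∪ (G.neighborFinset v).image (v, ·) := by
    rintro ⟨a, b⟩ hp
    by_cases hav : a = v
    · subst hav; simp_all
    · simp_all
  calc epairs G A Aᶜ
    _ ≤ epairs G (A.erase v) (A.erase v)ᶜ + #((G.neighborFinset v).image (v, ·)) :=
        (card_le_card hsub).trans (card_union_le _ _)
    _ ≤ epairs G (A.erase v) (A.erase v)ᶜ + G.degree v := by
        gcongr
        exact card_image_le

lemma exists_bisection_of_card_compl_le (A : Finset V) (hA : #Aᶜ ≤ #A) :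
    ∃ B : Finset V, |(#B : ℤ) - #Bᶜ| ≤ 1 ∧
      (epairs G A Aᶜ : ℝ) ≤ epairs G B Bᶜ + avgDegree G * (#A - #Aᶜ) := by
  induction A using Finset.strongInduction with
  | H A ih =>
    by_cases hbal : #A ≤ #Aᶜ + 1
    · have himb : (0 : ℝ) ≤ #A - #Aᶜ := sub_nonneg.2 (mod_cast hA)
      exact ⟨A, by rw [abs_le]; omega,
        le_add_of_nonneg_right (mul_nonneg (avgDegree_nonneg G) himb)⟩
    have hcompl := card_add_card_compl A
    obtain ⟨v, hv, hdeg⟩ := exists_mem_degree_le_two_mul_avgDegree G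
      (card_pos.1 (by omega)) (by omega : Fintype.card V ≤ 2 * #A)
    have herase : #(A.erase v) + 1 = #A := card_erase_add_one hv
    have herase_compl : #(A.erase v)ᶜ = #Aᶜ + 1 := by
      have := card_add_card_compl (A.erase v)
      omega
    obtain ⟨B, hB, hle⟩ := ih (A.erase v) (erase_ssubset hv) (by omega)
    refine ⟨B, hB, ?_⟩
    have hmove : (epairs G A Aᶜ : ℝ) ≤ epairs G (A.erase v) (A.erase v)ᶜ + G.degree v :=
      mod_cast epairs_compl_le_epairs_erase_compl_add_degree G A v
    rw [← herase]
    rw [herase_compl] at hle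
    push_cast at hle ⊢
    linarith

lemma exists_bisection_epairs_le (A : Finset V) :
    ∃ B : Finset V, |(#B : ℤ) - #Bᶜ| ≤ 1 ∧
      (epairs G A Aᶜ : ℝ) ≤ epairs G B Bᶜ + avgDegree G * |(#A : ℝ) - #Aᶜ| := by
  rcases le_total #Aᶜ #A with h | h
  · rw [abs_of_nonneg (sub_nonneg.2 (mod_cast h))]
    exact exists_bisection_of_card_compl_le G A h
  · rw [abs_sub_comm, abs_of_nonneg (sub_nonneg.2 (mod_cast h)), epairs_comm]
    simpa only [compl_compl] using exists_bisection_of_card_compl_le G Aᶜ (by rwa [compl_compl])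

end Rebalancing

/-- The sign of a real number, valued in `{-1, 1}`: zero counts as positive, so that rounding real
labels by their sign always gives a partition into two parts. -/
noncomputable def pmSign (x : ℝ) : ℝ := if 0 ≤ x then 1 else -1

lemma pmSign_mul_self (x : ℝ) : pmSign x * pmSign x = 1 := by
  unfold pmSign; split_ifs <;> norm_num

lemma abs_pmSign (x : ℝ) : |pmSign x| = 1 := by
  unfold pmSign; split_ifs <;> norm_num

lemma pmSign_of_pos {x : ℝ} (hx : 0 < x) : pmSign x = 1 := if_pos hx.le

lemma pmSign_of_neg {x : ℝ} (hx : x < 0) : pmSign x = -1 := if_neg hx.not_ge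

lemma pmSign_mul_of_pos {r : ℝ} (hr : 0 < r) (x : ℝ) : pmSign (r * x) = pmSign x := by
  simp only [pmSign, mul_nonneg_iff_of_pos_left hr]

lemma pmSign_eq_div_abs {x : ℝ} (hx : x ≠ 0) : pmSign x = x / |x| := by
  rcases hx.lt_or_gt with h | h
  · rw [pmSign_of_neg h, abs_of_neg h, div_neg, div_self hx]
  · rw [pmSign_of_pos h, abs_of_pos h, div_self hx]

@[fun_prop]
lemma measurable_pmSign : Measurable pmSign :=
  Measurable.ite measurableSet_Ici measurable_const measurable_const

section SignRounding

variable {V : Type*} [Fintype V]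

/-- The side of the cut obtained by rounding real vertex labels to their signs; for the labels
`⟨y_v, g⟩` it is the set of vertices on one side of the hyperplane orthogonal to `g`. -/
noncomputable def nonnegSide (t : V → ℝ) : Finset V := univ.filter fun v => 0 ≤ t v

lemma sum_pmSign_sq (t : V → ℝ) :
    (∑ v, pmSign (t v)) ^ 2 =
      Fintype.card V + ∑ p ∈ univ.offDiag, pmSign (t p.1) * pmSign (t p.2) := by
  classical
  rw [sq, sum_mul_sum, ← sum_product', ← diag_union_offDiag,
    sum_union (disjoint_diag_offDiag _), sum_diag]
  simp only [pmSign_mul_self, sum_const, card_univ, nsmul_eq_mul, mul_one]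

variable [DecidableEq V]

lemma card_nonnegSide_sub_card_compl (t : V → ℝ) :
    (#(nonnegSide t) : ℝ) - #(nonnegSide t)ᶜ = ∑ v, pmSign (t v) := by
  simp only [nonnegSide, pmSign, sum_ite, compl_filter, sum_const, nsmul_eq_mul]
  ring

variable (G : SimpleGraph V) [DecidableRel G.Adj]

lemma epairs_univ : epairs G univ univ = 2 * #G.edgeFinset := by
  rw [← G.sum_degrees_eq_twice_card_edges, epairs, card_filter, sum_product]
  refine sum_congr rfl fun v _ => ?_
  rw [← card_filter, ← G.card_neighborFinset_eq_degree, G.neighborFinset_eq_filter]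

lemma epairs_eq_sum_ite (A B : Finset V) :
    (epairs G A B : ℝ) = ∑ p ∈ (univ ×ˢ univ).filter (fun p : V × V => G.Adj p.1 p.2),
      if p.1 ∈ A ∧ p.2 ∈ B then 1 else 0 := by
  rw [epairs, ← natCast_card_filter, filter_filter]
  congr 2
  ext p
  simp only [mem_filter, mem_product, mem_univ, true_and]
  exact and_comm

lemma epairs_nonnegSide_compl (t : V → ℝ) :
    (epairs G (nonnegSide t) (nonnegSide t)ᶜ : ℝ) = #G.edgeFinset / 2 -
      1 / 4 * ∑ p ∈ (univ ×ˢ univ).filter (fun p : V × V => G.Adj p.1 p.2),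
        pmSign (t p.1) * pmSign (t p.2) := by
  set A := nonnegSide t
  set P := (univ ×ˢ univ).filter (fun p : V × V => G.Adj p.1 p.2)
  have hcard : (#P : ℝ) = 2 * #G.edgeFinset := mod_cast epairs_univ G
  have hcross (p : V × V) : ((if p.1 ∈ A ∧ p.2 ∈ Aᶜ then 1 else 0) +
      (if p.1 ∈ Aᶜ ∧ p.2 ∈ A then 1 else 0) : ℝ) =
        1 / 2 - 1 / 2 * (pmSign (t p.1) * pmSign (t p.2)) := by
    simp only [A, nonnegSide, pmSign, mem_compl, mem_filter, mem_univ, true_and]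
    split_ifs <;> first | tauto | norm_num
  have htwice : (2 * epairs G A Aᶜ : ℝ) =
      #P * (1 / 2) - 1 / 2 * ∑ p ∈ P, pmSign (t p.1) * pmSign (t p.2) := by
    calc (2 * epairs G A Aᶜ : ℝ)
      _ = epairs G A Aᶜ + epairs G Aᶜ A := by rw [epairs_comm G Aᶜ A, two_mul]
      _ = ∑ p ∈ P, (1 / 2 - 1 / 2 * (pmSign (t p.1) * pmSign (t p.2))) := by
        rw [epairs_eq_sum_ite, epairs_eq_sum_ite, ← sum_add_distrib]
        exact sum_congr rfl fun p _ => hcross p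
      _ = _ := by rw [sum_sub_distrib, sum_const, nsmul_eq_mul, ← mul_sum]
  linarith

end SignRounding

section RandomCut

open MeasureTheory ProbabilityTheory

variable {Ω : Type*} [MeasurableSpace Ω] {μ : Measure Ω}

lemma integral_abs_le_sqrt_integral_sq [IsProbabilityMeasure μ] {X : Ω → ℝ} (hX : MemLp X 2 μ) :
    ∫ ω, |X ω| ∂μ ≤ √(∫ ω, X ω ^ 2 ∂μ) := by
  refine Real.le_sqrt_of_sq_le ?_
  have hvar := variance_nonneg |X| μ
  rw [variance_eq_sub hX.abs, sub_nonneg] at hvar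
  simpa only [Pi.pow_apply, Pi.abs_apply, sq_abs] using hvar

lemma memLp_pmSign [IsFiniteMeasure μ] (p : ENNReal) {X : Ω → ℝ} (hX : AEMeasurable X μ) :
    MemLp (fun ω => pmSign (X ω)) p μ :=
  .of_bound (measurable_pmSign.comp_aemeasurable hX).aestronglyMeasurable 1
    (.of_forall fun _ => (abs_pmSign _).le)

lemma integrable_pmSign_mul_pmSign [IsFiniteMeasure μ] {X Y : Ω → ℝ} (hX : AEMeasurable X μ)
    (hY : AEMeasurable Y μ) : Integrable (fun ω => pmSign (X ω) * pmSign (Y ω)) μ :=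
  (memLp_pmSign 2 hX).integrable_mul (memLp_pmSign 2 hY)

variable {V : Type*} [Fintype V] {t : V → Ω → ℝ}
  (ht : ∀ v, AEMeasurable (t v) μ)

include ht

lemma integral_sum_pmSign_sq [IsProbabilityMeasure μ] :
    ∫ ω, (∑ v, pmSign (t v ω)) ^ 2 ∂μ = Fintype.card V +
      ∑ p ∈ univ.offDiag, ∫ ω, pmSign (t p.1 ω) * pmSign (t p.2 ω) ∂μ := by
  have hint (p : V × V) := integrable_pmSign_mul_pmSign (ht p.1) (ht p.2)
  simp only [sum_pmSign_sq]
  rw [integral_add (integrable_const _) (integrable_finsetSum _ fun p _ => hint p),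
    integral_finsetSum _ fun p _ => hint p, integral_const, probReal_univ, one_smul]

variable [DecidableEq V] (G : SimpleGraph V) [DecidableRel G.Adj]

lemma integrable_epairs_nonnegSide_compl [IsFiniteMeasure μ] :
    Integrable (fun ω => (epairs G (nonnegSide (t · ω)) (nonnegSide (t · ω))ᶜ : ℝ)) μ := by
  simp only [epairs_nonnegSide_compl]
  exact (integrable_const _).sub
    ((integrable_finsetSum _ fun p _ => integrable_pmSign_mul_pmSign (ht p.1) (ht p.2)).const_mul _)

lemma integral_epairs_nonnegSide_compl [IsProbabilityMeasure μ] :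
    ∫ ω, (epairs G (nonnegSide (t · ω)) (nonnegSide (t · ω))ᶜ : ℝ) ∂μ = #G.edgeFinset / 2 -
      1 / 4 * ∑ p ∈ (univ ×ˢ univ).filter (fun p : V × V => G.Adj p.1 p.2),
        ∫ ω, pmSign (t p.1 ω) * pmSign (t p.2 ω) ∂μ := by
  have hint (p : V × V) := integrable_pmSign_mul_pmSign (ht p.1) (ht p.2)
  simp only [epairs_nonnegSide_compl]
  rw [integral_sub (integrable_const _)
      ((integrable_finsetSum _ fun p _ => hint p).const_mul _), integral_const_mul,
    integral_finsetSum _ fun p _ => hint p, integral_const, probReal_univ, one_smul]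

theorem exists_bisection_ge_of_random_labels [IsProbabilityMeasure μ] :
    ∃ A : Finset V, |(#A : ℤ) - #Aᶜ| ≤ 1 ∧
      #G.edgeFinset / 2 - 1 / 4 * ∑ p ∈ (univ ×ˢ univ).filter (fun p : V × V => G.Adj p.1 p.2),
          ∫ ω, pmSign (t p.1 ω) * pmSign (t p.2 ω) ∂μ
        - avgDegree G * √(Fintype.card V +
          ∑ p ∈ univ.offDiag, ∫ ω, pmSign (t p.1 ω) * pmSign (t p.2 ω) ∂μ)
      ≤ epairs G A Aᶜ := by
  set cutSize : Ω → ℝ := fun ω => epairs G (nonnegSide (t · ω)) (nonnegSide (t · ω))ᶜ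
  set imbalance : Ω → ℝ := fun ω => ∑ v, pmSign (t v ω)
  have hcut : Integrable cutSize μ := integrable_epairs_nonnegSide_compl ht G
  have himb : MemLp imbalance 2 μ := memLp_finsetSum _ fun v _ => memLp_pmSign 2 (ht v)
  have himb_abs : Integrable (fun ω => avgDegree G * |imbalance ω|) μ :=
    (himb.integrable one_le_two).abs.const_mul _
  obtain ⟨ω, hω⟩ := exists_integral_le (hcut.sub himb_abs)
  obtain ⟨A, hA, hle⟩ := exists_bisection_epairs_le G (nonnegSide (t · ω))
  refine ⟨A, hA, ?_⟩
  rw [card_nonnegSide_sub_card_compl] at hle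
  rw [← integral_epairs_nonnegSide_compl ht, ← integral_sum_pmSign_sq ht]
  calc ∫ ω, cutSize ω ∂μ - avgDegree G * √(∫ ω, imbalance ω ^ 2 ∂μ)
    _ ≤ ∫ ω, cutSize ω ∂μ - avgDegree G * ∫ ω, |imbalance ω| ∂μ := by
        gcongr
        · exact avgDegree_nonneg G
        · exact integral_abs_le_sqrt_integral_sq himb
    _ = ∫ ω, (cutSize - fun ω => avgDegree G * |imbalance ω|) ω ∂μ := by
        rw [integral_sub' hcut himb_abs, integral_const_mul]
    _ ≤ cutSize ω - avgDegree G * |imbalance ω| := hω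
    _ ≤ epairs G A Aᶜ := sub_le_iff_le_add.2 hle

end RandomCut

section StandardGaussian

open MeasureTheory ProbabilityTheory

variable {E F : Type*}
  [NormedAddCommGroup E] [InnerProductSpace ℝ E] [FiniteDimensional ℝ E]
  [MeasurableSpace E] [BorelSpace E]
  [NormedAddCommGroup F] [InnerProductSpace ℝ F] [FiniteDimensional ℝ F]
  [MeasurableSpace F] [BorelSpace F]

instance nullSingletonClass_stdGaussian [Nontrivial E] : NullSingletonClass (stdGaussian E) := by
  refine IsGaussian.nullSingletonClass fun x hx => ?_
  obtain ⟨u, hu⟩ := exists_ne (0 : E)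
  have hvar := variance_dual_stdGaussian (innerSL ℝ u)
  rw [hx, variance_dirac, innerSL_apply_norm] at hvar
  exact pow_ne_zero 2 (norm_ne_zero_iff.2 hu) hvar.symm

variable {ι : Type*}

lemma charFunDual_map_inner_stdGaussian [Fintype ι] [DecidableEq ι] (u : ι → E)
    (L : StrongDual ℝ (ι → ℝ)) :
    charFunDual ((stdGaussian E).map fun x i => ⟪u i, x⟫) L =
      Complex.exp (-(↑((fun i => L (Pi.single i 1)) ⬝ᵥ
        (Matrix.gram ℝ u).mulVec fun i => L (Pi.single i 1)) : ℂ) / 2) := by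
  have hcomp : L.comp (ContinuousLinearMap.pi fun i => innerSL ℝ (u i)) =
      innerSL ℝ (∑ i, L (Pi.single i 1) • u i) := by
    ext x
    have hL := congrArg L ((Pi.basisFun ℝ ι).sum_repr fun i => ⟪u i, x⟫)
    simpa [sum_inner, inner_smul_left, mul_comm] using hL.symm
  have hquad := Matrix.star_dotProduct_gram_mulVec (𝕜 := ℝ) u
    (fun i => L (Pi.single i 1)) (fun i => L (Pi.single i 1))
  rw [real_inner_self_eq_norm_sq, star_trivial] at hquad
  rw [show (fun (x : E) i => ⟪u i, x⟫) = ContinuousLinearMap.pi fun i => innerSL ℝ (u i) from rfl,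
    charFunDual_map, charFunDual_stdGaussian, hcomp, innerSL_apply_norm, hquad, Complex.ofReal_pow]

theorem map_inner_stdGaussian_eq_of_gram_eq [Finite ι] {u : ι → E} {v : ι → F}
    (h : Matrix.gram ℝ u = Matrix.gram ℝ v) :
    (stdGaussian E).map (fun x i => ⟪u i, x⟫) = (stdGaussian F).map (fun x i => ⟪v i, x⟫) := by
  classical
  have := Fintype.ofFinite ι
  refine Measure.ext_of_charFunDual (funext fun L => ?_)
  simp only [charFunDual_map_inner_stdGaussian, h]

end StandardGaussian

section Sheppard

open MeasureTheory ProbabilityTheory Real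
open scoped ComplexConjugate

lemma intervalIntegrable_pmSign_comp {g : ℝ → ℝ} (hg : Measurable g) (a b : ℝ) :
    IntervalIntegrable (fun θ => pmSign (g θ)) volume a b :=
  (intervalIntegrable_const (c := (1 : ℝ))).mono_fun
    (measurable_pmSign.comp hg).aestronglyMeasurable (.of_forall fun θ => by simp [abs_pmSign])

lemma integral_pmSign_sin (a b : ℝ) :
    ∫ θ in a..b, pmSign (sin θ) = arccos (cos b) - arccos (cos a) := by
  have hcount : {θ : ℝ | sin θ = 0}.Countable :=
    (Set.countable_range fun n : ℤ => n * π).mono fun θ hθ => sin_eq_zero_iff.1 hθ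
  have hderiv (θ : ℝ) (hθ : sin θ ≠ 0) :
      HasDerivAt (fun θ => arccos (cos θ)) (pmSign (sin θ)) θ := by
    have hcos : cos θ ≠ -1 ∧ cos θ ≠ 1 := by
      constructor <;> intro h <;> exact hθ (by simpa [h] using sin_sq_add_cos_sq θ)
    refine ((hasDerivAt_arccos hcos.1 hcos.2).comp θ (hasDerivAt_cos θ)).congr_deriv ?_
    rw [pmSign_eq_div_abs hθ, abs_sin_eq_sqrt_one_sub_cos_sq]
    ring
  exact integral_eq_of_hasDerivAt_off_countable _ _ hcount (by fun_prop)
    (fun θ hθ => hderiv θ hθ.2) (intervalIntegrable_pmSign_comp measurable_sin a b)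

lemma integral_pmSign_sin_mul_pmSign_sin_add (α : ℝ) :
    ∫ θ in 0..2 * π, pmSign (sin θ) * pmSign (sin (θ + α)) = 4 * arcsin (cos α) := by
  have hint (a b : ℝ) :
      IntervalIntegrable (fun θ => pmSign (sin θ) * pmSign (sin (θ + α))) volume a b :=
    (intervalIntegrable_const (c := (1 : ℝ))).mono_fun (by fun_prop)
      (.of_forall fun θ => by simp [abs_pmSign])
  have hshift (a b : ℝ) : ∫ θ in a..b, pmSign (sin (θ + α)) =
      arccos (cos (b + α)) - arccos (cos (a + α)) := by
    rw [intervalIntegral.integral_comp_add_right (fun θ => pmSign (sin θ)), integral_pmSign_sin]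
  have hupper : ∫ θ in 0..π, pmSign (sin θ) * pmSign (sin (θ + α)) =
      ∫ θ in 0..π, pmSign (sin (θ + α)) :=
    intervalIntegral.integral_congr_Ioo_of_le pi_pos.le fun θ hθ => by
      simp only [pmSign_of_pos (sin_pos_of_mem_Ioo hθ), one_mul]
  have hlower : ∫ θ in π..2 * π, pmSign (sin θ) * pmSign (sin (θ + α)) =
      ∫ θ in π..2 * π, -pmSign (sin (θ + α)) :=
    intervalIntegral.integral_congr_Ioo_of_le (by linarith [pi_pos]) fun θ hθ => by
      have hneg : sin θ < 0 := by
        rw [← sin_sub_two_pi]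
        exact sin_neg_of_neg_of_neg_pi_lt (by linarith [hθ.2]) (by linarith [hθ.1])
      simp only [pmSign_of_neg hneg, neg_one_mul]
  rw [← intervalIntegral.integral_add_adjacent_intervals (hint 0 π) (hint π (2 * π)), hupper,
    hlower, intervalIntegral.integral_neg, hshift, hshift, zero_add, add_comm π, cos_add_pi,
    add_comm (2 * π), cos_add_two_pi, arccos_neg, arcsin_eq_pi_div_two_sub_arccos]
  ring

lemma circleMap_zero_norm_add_arg (z : ℂ) (θ : ℝ) :
    circleMap 0 ‖z‖ (θ + z.arg) = rotation (Circle.exp θ) z := by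
  simp only [circleMap_zero, rotation_apply, Circle.coe_exp]
  conv_rhs => rw [← Complex.norm_mul_exp_arg_mul_I z]
  push_cast
  rw [add_mul, Complex.exp_add]
  ring

lemma measurePreserving_prodMk_rotation_exp (ν : Measure ℝ) [SFinite ν] {μ : Measure ℂ} [SFinite μ]
    (hμ : ∀ a : Circle, μ.map (rotation a) = μ) :
    MeasurePreserving (fun p : ℝ × ℂ => (p.1, rotation (Circle.exp p.1) p.2))
      (ν.prod μ) (ν.prod μ) := by
  refine (MeasurePreserving.id ν).skew_product ?_ (.of_forall fun θ => hμ _)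
  simp only [Function.uncurry_def, rotation_apply]
  fun_prop

lemma integral_eq_integral_circleAverage {μ : Measure ℂ} [SFinite μ]
    (hμ : ∀ a : Circle, μ.map (rotation a) = μ)
    {E : Type*} [NormedAddCommGroup E] [NormedSpace ℝ E] [CompleteSpace E]
    {f : ℂ → E} (hf : Integrable f μ) :
    ∫ z, f z ∂μ = ∫ z, circleAverage f 0 ‖z‖ ∂μ := by
  have hrot (θ : ℝ) : ∫ z, f (rotation (Circle.exp θ) z) ∂μ = ∫ z, f z ∂μ := by
    conv_rhs => rw [← hμ (Circle.exp θ)]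
    exact ((rotation _).toHomeomorph.measurableEmbedding.integral_map f).symm
  have : IsFiniteMeasure (volume.restrict (Set.uIoc 0 (2 * π))) := by
    rw [Set.uIoc]
    infer_instance
  have hprod : Integrable (Function.uncurry fun (θ : ℝ) z => f (rotation (Circle.exp θ) z))
      ((volume.restrict (Set.uIoc 0 (2 * π))).prod μ) :=
    (measurePreserving_prodMk_rotation_exp _ hμ).integrable_comp_of_integrable (hf.comp_snd _)
  calc ∫ z, f z ∂μ
    _ = (2 * π)⁻¹ • ∫ θ in 0..2 * π, (∫ z, f (rotation (Circle.exp θ) z) ∂μ) := by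
        simp only [hrot]
        rw [intervalIntegral.integral_const, sub_zero, inv_smul_smul₀ two_pi_pos.ne']
    _ = ∫ z, (2 * π)⁻¹ • (∫ θ in 0..2 * π, f (rotation (Circle.exp θ) z)) ∂μ := by
        rw [intervalIntegral_integral_swap hprod, integral_smul]
    _ = ∫ z, circleAverage f 0 ‖z‖ ∂μ := by
        refine integral_congr_ae (.of_forall fun z => ?_)
        simp only [circleAverage_eq_integral_add z.arg, circleMap_zero_norm_add_arg]

lemma integral_stdGaussian_complex_of_homogeneous {E : Type*} [NormedAddCommGroup E]
    [NormedSpace ℝ E] [CompleteSpace E] {f : ℂ → E} (hf : Integrable f (stdGaussian ℂ))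
    (hhom : ∀ r : ℝ, 0 < r → ∀ z, f (r * z) = f z) :
    ∫ z, f z ∂stdGaussian ℂ = circleAverage f 0 1 := by
  have hradius {r : ℝ} (hr : 0 < r) : circleAverage f 0 r = circleAverage f 0 1 := by
    simp only [circleAverage_def, circleMap_zero, Complex.ofReal_one, one_mul, hhom r hr]
  rw [integral_eq_integral_circleAverage (fun a => stdGaussian_map (rotation a)) hf]
  have hae : (fun z : ℂ => circleAverage f 0 ‖z‖) =ᵐ[stdGaussian ℂ]
      fun _ => circleAverage f 0 1 := by
    filter_upwards [measure_eq_zero_iff_ae_notMem.1 (measure_singleton (0 : ℂ))] with z hz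
    exact hradius (norm_pos_iff.2 hz)
  rw [integral_congr_ae hae, integral_const, probReal_univ, one_smul]

lemma integral_pmSign_im_mul_pmSign_im_stdGaussian (α : ℝ) :
    ∫ z : ℂ, pmSign z.im * pmSign (z * Complex.exp (α * Complex.I)).im ∂stdGaussian ℂ =
      2 / π * arcsin (cos α) := by
  have hint : Integrable (fun z : ℂ => pmSign z.im * pmSign (z * Complex.exp (α * Complex.I)).im)
      (stdGaussian ℂ) :=
    integrable_pmSign_mul_pmSign (by fun_prop) (by fun_prop)
  rw [integral_stdGaussian_complex_of_homogeneous hint fun r hr z => by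
      rw [mul_assoc, Complex.im_ofReal_mul, Complex.im_ofReal_mul, pmSign_mul_of_pos hr,
        pmSign_mul_of_pos hr],
    circleAverage_def]
  have hcircle (θ : ℝ) : (circleMap 0 1 θ).im = sin θ ∧
      (circleMap 0 1 θ * Complex.exp (α * Complex.I)).im = sin (θ + α) := by
    simp [circleMap_zero, ← Complex.exp_add, ← add_mul, ← Complex.ofReal_add,
      Complex.exp_ofReal_mul_I_im]
  simp only [hcircle, integral_pmSign_sin_mul_pmSign_sin_add, smul_eq_mul]
  field_simp
  norm_num

theorem integral_pmSign_inner_mul_pmSign_inner_stdGaussian {E : Type*} [NormedAddCommGroup E]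
    [InnerProductSpace ℝ E] [FiniteDimensional ℝ E] [MeasurableSpace E] [BorelSpace E] {u v : E}
    (hu : u ≠ 0) (hv : v ≠ 0) :
    ∫ g, pmSign ⟪u, g⟫ * pmSign ⟪v, g⟫ ∂stdGaussian E =
      2 / π * arcsin (⟪u, v⟫ / (‖u‖ * ‖v‖)) := by
  set α := InnerProductGeometry.angle u v
  set a : ℂ := ‖u‖ * Complex.I
  set b : ℂ := ‖v‖ * (Complex.exp (-(α * Complex.I)) * Complex.I)
  have ha (z : ℂ) : ⟪a, z⟫ = ‖u‖ * z.im := by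
    simp [a, Complex.inner, mul_comm]
  have hb (z : ℂ) : ⟪b, z⟫ = ‖v‖ * (z * Complex.exp (α * Complex.I)).im := by
    have hconj : conj b = ‖v‖ * (Complex.exp (α * Complex.I) * -Complex.I) := by
      simp [b, ← Complex.exp_conj]
    rw [Complex.inner, hconj, mul_left_comm, Complex.re_ofReal_mul, ← mul_assoc, mul_neg,
      Complex.neg_re, Complex.mul_I_re, neg_neg]
  have hgram : Matrix.gram ℝ ![u, v] = Matrix.gram ℝ ![a, b] := by
    have hab : ⟪a, b⟫ = ⟪u, v⟫ := by
      have him : b.im = ‖v‖ * cos α := by simp [b, Complex.exp_re]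
      rw [ha, him, ← InnerProductGeometry.cos_angle_mul_norm_mul_norm]
      ring
    have hbb : ‖b‖ = ‖v‖ := by simp [b, Complex.norm_exp]
    ext i j
    fin_cases i <;> fin_cases j <;> simp [hab, hbb, a, real_inner_comm]
  have hlaw := map_inner_stdGaussian_eq_of_gram_eq hgram
  have hF : Measurable fun p : Fin 2 → ℝ => pmSign (p 0) * pmSign (p 1) := by fun_prop
  calc ∫ g, pmSign ⟪u, g⟫ * pmSign ⟪v, g⟫ ∂stdGaussian E
    _ = ∫ p, pmSign (p 0) * pmSign (p 1) ∂(stdGaussian E).map fun g i => ⟪![u, v] i, g⟫ := by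
        rw [integral_map (by fun_prop) hF.aestronglyMeasurable]
        rfl
    _ = ∫ z, pmSign ⟪a, z⟫ * pmSign ⟪b, z⟫ ∂stdGaussian ℂ := by
        rw [hlaw, integral_map (by fun_prop) hF.aestronglyMeasurable]
        rfl
    _ = 2 / π * arcsin (cos α) := by
        simp only [ha, hb, pmSign_mul_of_pos (norm_pos_iff.2 hu),
          pmSign_mul_of_pos (norm_pos_iff.2 hv), integral_pmSign_im_mul_pmSign_im_stdGaussian]
    _ = 2 / π * arcsin (⟪u, v⟫ / (‖u‖ * ‖v‖)) := by rw [InnerProductGeometry.cos_angle]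

end Sheppard

theorem stmt_17_general {V : Type*} [Fintype V] [DecidableEq V]
    (G : SimpleGraph V) [DecidableRel G.Adj] {E : Type*}
    [NormedAddCommGroup E] [InnerProductSpace ℝ E] (y : V → E) (hy : ∀ v, ‖y v‖ = 1) :
    ∃ A B : Finset V, A ∪ B = Finset.univ ∧ Disjoint A B ∧
      |(A.card : ℤ) - (B.card : ℤ)| ≤ 1 ∧
      (G.edgeFinset.card : ℝ) / 2
        - (1 / Real.pi) * ((1 / 2 : ℝ) *
            ∑ p ∈ (Finset.univ ×ˢ Finset.univ).filter
              (fun p : V × V => G.Adj p.1 p.2), Real.arcsin ⟪y p.1, y p.2⟫)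
        - (2 * (G.edgeFinset.card : ℝ) / (Fintype.card V : ℝ)) *
            Real.sqrt ((Fintype.card V : ℝ) + (4 / Real.pi) * ((1 / 2 : ℝ) *
              ∑ p ∈ Finset.univ.offDiag, Real.arcsin ⟪y p.1, y p.2⟫))
      ≤ (epairs G A B : ℝ) := by
  let W := Submodule.span ℝ (Set.range y)
  have : FiniteDimensional ℝ W := .span_of_finite ℝ (Set.finite_range y)
  let _ : MeasurableSpace W := borel W
  have : BorelSpace W := ⟨rfl⟩
  let y' (v : V) : W := ⟨y v, Submodule.subset_span ⟨v, rfl⟩⟩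
  have hsheppard (u v : V) :
      ∫ g, pmSign ⟪y' u, g⟫ * pmSign ⟪y' v, g⟫ ∂ProbabilityTheory.stdGaussian W =
        2 / Real.pi * Real.arcsin ⟪y u, y v⟫ := by
    have hnorm (v : V) : ‖y' v‖ = 1 := hy v
    have hne (v : V) : y' v ≠ 0 := norm_ne_zero_iff.1 (by simp [hnorm])
    simpa [hnorm] using integral_pmSign_inner_mul_pmSign_inner_stdGaussian (hne u) (hne v)
  obtain ⟨A, hA, hle⟩ := exists_bisection_ge_of_random_labels
    (μ := ProbabilityTheory.stdGaussian W) (t := fun v g => ⟪y' v, g⟫) (fun v => by fun_prop) G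
  refine ⟨A, Aᶜ, union_compl A, disjoint_compl_right, hA, le_of_eq_of_le ?_ hle⟩
  simp only [hsheppard, ← mul_sum, avgDegree]
  congr 2
  · ring
  · congr 2
    ring

/-- Let `G` have `n` vertices, `m` edges and average degree `d = 2m/n`, and let
`{y_v}` be unit vectors in `ℝ^N`.  Then `G` has a bisection of size at least
`m/2 − (1/π)·Σ_{uv∈E} arcsin⟨y_u,y_v⟩ − d·√(n + (4/π)·Σ_{{u,v}} arcsin⟨y_u,y_v⟩)`,
the last sum over unordered pairs of distinct vertices (sums over edges and over
unordered pairs are written as halves of sums over ordered pairs). -/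
theorem stmt_17 {V : Type*} [Fintype V] [DecidableEq V]
    (G : SimpleGraph V) [DecidableRel G.Adj] {N : ℕ}
    (y : V → EuclideanSpace ℝ (Fin N)) (hy : ∀ v, ‖y v‖ = 1) :
    ∃ A B : Finset V, A ∪ B = Finset.univ ∧ Disjoint A B ∧
      |(A.card : ℤ) - (B.card : ℤ)| ≤ 1 ∧
      (G.edgeFinset.card : ℝ) / 2
        - (1 / Real.pi) * ((1 / 2 : ℝ) *
            ∑ p ∈ (Finset.univ ×ˢ Finset.univ).filter
              (fun p : V × V => G.Adj p.1 p.2), Real.arcsin ⟪y p.1, y p.2⟫)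
        - (2 * (G.edgeFinset.card : ℝ) / (Fintype.card V : ℝ)) *
            Real.sqrt ((Fintype.card V : ℝ) + (4 / Real.pi) * ((1 / 2 : ℝ) *
              ∑ p ∈ Finset.univ.offDiag, Real.arcsin ⟪y p.1, y p.2⟫))
      ≤ (epairs G A B : ℝ) :=
  stmt_17_general G y hy
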